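/- The Bott–Thurston cocycle satisfies the group 2-cocycle identity: for all orientation-preserving diffeomorphisms γ₁, γ₂, γ₃ of the circle, B(γ₁, γ₂) + B(γ₁∘γ₂, γ₃) = B(γ₂, γ₃) + B(γ₁, γ₂∘γ₃), where B(γ₁,γ₂) = ∫_{S¹} log(γ₁'∘γ₂) d(log γ₂'). -/

import Mathlib

open Real intervalIntegral

/-- A lift to `ℝ` of an orientation-preserving diffeomorphism of the circle:
a smooth map commuting with translation by `2π` and with positive derivative. -/
def IsCircleDiffLift (f : ℝ → ℝ) : Prop :=
  ContDiff ℝ (⊤ : ℕ∞) f ∧ (∀ x, f (x + 2 * Real.pi) = f x + 2 * Real.pi) ∧ ∀ x, 0 < deriv f x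

/-- The real-valued Bott–Thurston cocycle
`B(γ₁,γ₂) = ∫_{S¹} log(γ₁'∘γ₂) d(log γ₂')`, expressed via lifts. -/
noncomputable def bottThurston (f g : ℝ → ℝ) : ℝ :=
  ∫ θ in (0:ℝ)..(2 * Real.pi),
    Real.log (deriv f (g θ)) * deriv (fun t => Real.log (deriv g t)) θ

/-!
The function `log γ'` is a 1-cocycle: `log (γ₁ ∘ γ₂)' = log γ₁' ∘ γ₂ + log γ₂'`. Inserting this
into the two terms of the identity that contain a composition gives

* `B(γ₁ ∘ γ₂, γ₃) = ∫ log (γ₁' ∘ γ₂ ∘ γ₃) d(log γ₃') + B(γ₂, γ₃)`,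
* `B(γ₁, γ₂ ∘ γ₃) = ∫ log (γ₁' ∘ γ₂ ∘ γ₃) d(log γ₂' ∘ γ₃) + ∫ log (γ₁' ∘ γ₂ ∘ γ₃) d(log γ₃')`.

The first integral in the second line is `B(γ₁, γ₂)` by the change of variables `γ₃`; when `γ₃` is
only a covering of the circle of degree `n`, it is `n * B(γ₁, γ₂)`.
-/

/-- The function `log f'`, the 1-cocycle from which the Bott–Thurston cocycle is built. Since
`Real.log` is even, this is `log |f'|` wherever `f'` does not vanish. -/
noncomputable def logJacobian (f : ℝ → ℝ) (x : ℝ) : ℝ :=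
  Real.log (deriv f x)

/-- A lift to `ℝ` of an orientation-preserving `C^k` covering of the circle `ℝ / 2πℤ` by itself, of
degree `n`. A lift of an orientation-preserving diffeomorphism is the case `n = 1`. -/
structure IsCircleCoveringLift (k : WithTop ℕ∞) (n : ℤ) (f : ℝ → ℝ) : Prop where
  contDiff : ContDiff ℝ k f
  map_add_two_pi : ∀ x, f (x + 2 * π) = f x + n * (2 * π)
  deriv_pos : ∀ x, 0 < deriv f x

theorem IsCircleCoveringLift.deriv_ne_zero {k : WithTop ℕ∞} {n : ℤ} {f : ℝ → ℝ}
    (hf : IsCircleCoveringLift k n f) (x : ℝ) : deriv f x ≠ 0 :=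
  (hf.deriv_pos x).ne'

theorem IsCircleDiffLift.isCircleCoveringLift {f : ℝ → ℝ} (hf : IsCircleDiffLift f) (k : ℕ∞) :
    IsCircleCoveringLift k 1 f where
  contDiff := hf.1.of_le (WithTop.coe_le_coe.2 le_top)
  map_add_two_pi := by simpa using hf.2.1
  deriv_pos := hf.2.2

section Periodic

theorem periodic_deriv_of_map_add {𝕜 F : Type*} [NontriviallyNormedField 𝕜]
    [NormedAddCommGroup F] [NormedSpace 𝕜 F] {f : 𝕜 → F} {T : 𝕜} {c : F}
    (hf : ∀ x, f (x + T) = f x + c) : Function.Periodic (deriv f) T := fun x ↦ by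
  rw [← deriv_comp_add_const, funext hf, deriv_add_const]

theorem integral_deriv_smul_comp_of_periodic {E : Type*} [NormedAddCommGroup E] [NormedSpace ℝ E]
    {F : ℝ → E} {f : ℝ → ℝ} {T a : ℝ} {n : ℤ} (hF : Continuous F) (hFT : Function.Periodic F T)
    (hf : ContDiff ℝ 1 f) (hfT : f (a + T) = f a + n * T) :
    ∫ x in a..a + T, deriv f x • F (f x) = n • ∫ y in a..a + T, F y :=
  calc
    ∫ x in a..a + T, deriv f x • F (f x) = ∫ y in f a..f a + n • T, F y := by
      rw [zsmul_eq_mul, ← hfT]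
      exact integral_deriv_smul_comp
        (fun x _ ↦ (hf.differentiable one_ne_zero x).hasDerivAt)
        hf.continuous_deriv_one.continuousOn hF
    _ = n • ∫ y in f a..f a + T, F y :=
      hFT.intervalIntegral_add_zsmul_eq n (f a) fun _ _ ↦ hF.intervalIntegrable _ _
    _ = n • ∫ y in a..a + T, F y := by rw [hFT.intervalIntegral_add_eq (f a) a]

end Periodic

section LogJacobian

variable {f g : ℝ → ℝ}

theorem contDiff_logJacobian {k : WithTop ℕ∞} (hf : ContDiff ℝ (k + 1) f)
    (hf' : ∀ x, deriv f x ≠ 0) : ContDiff ℝ k (logJacobian f) :=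
  hf.deriv'.log hf'

theorem continuous_logJacobian (hf : ContDiff ℝ 1 f) (hf' : ∀ x, deriv f x ≠ 0) :
    Continuous (logJacobian f) :=
  hf.continuous_deriv_one.log hf'

theorem contDiff_one_logJacobian (hf : ContDiff ℝ 2 f) (hf' : ∀ x, deriv f x ≠ 0) :
    ContDiff ℝ 1 (logJacobian f) :=
  contDiff_logJacobian (by rwa [one_add_one_eq_two]) hf'

theorem periodic_logJacobian_of_map_add {T c : ℝ} (hf : ∀ x, f (x + T) = f x + c) :
    Function.Periodic (logJacobian f) T :=
  (periodic_deriv_of_map_add hf).comp Real.log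

theorem logJacobian_comp {x : ℝ} (hf : deriv f (g x) ≠ 0) (hg : deriv g x ≠ 0) :
    logJacobian (f ∘ g) x = logJacobian f (g x) + logJacobian g x := by
  unfold logJacobian
  rw [deriv_comp x (differentiableAt_of_deriv_ne_zero hf) (differentiableAt_of_deriv_ne_zero hg),
    Real.log_mul hf hg]

theorem deriv_logJacobian_comp (hf' : ∀ x, deriv f x ≠ 0) (hg' : ∀ x, deriv g x ≠ 0) {x : ℝ}
    (hf : DifferentiableAt ℝ (logJacobian f) (g x)) (hg : DifferentiableAt ℝ (logJacobian g) x) :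
    deriv (logJacobian (f ∘ g)) x =
      deriv g x * deriv (logJacobian f) (g x) + deriv (logJacobian g) x := by
  have cocycle : logJacobian (f ∘ g) = logJacobian f ∘ g + logJacobian g :=
    funext fun y ↦ logJacobian_comp (hf' (g y)) (hg' y)
  have hgx : DifferentiableAt ℝ g x := differentiableAt_of_deriv_ne_zero (hg' x)
  rw [cocycle, deriv_add (hf.comp x hgx) hg, deriv_comp x hf hgx, mul_comm]

end LogJacobian

section BottThurston

variable {f g h : ℝ → ℝ}

theorem bottThurston_eq_integral_logJacobian (f g : ℝ → ℝ) :
    bottThurston f g =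
      ∫ θ in (0 : ℝ)..2 * π, logJacobian f (g θ) * deriv (logJacobian g) θ :=
  rfl

theorem bottThurston_comp_left (hf : ContDiff ℝ 1 f) (hf' : ∀ x, deriv f x ≠ 0)
    (hg : ContDiff ℝ 1 g) (hg' : ∀ x, deriv g x ≠ 0)
    (hh : ContDiff ℝ 2 h) (hh' : ∀ x, deriv h x ≠ 0) :
    bottThurston (f ∘ g) h =
      (∫ θ in (0 : ℝ)..2 * π, logJacobian f (g (h θ)) * deriv (logJacobian h) θ) +
        bottThurston g h := by
  have hLf := continuous_logJacobian hf hf'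
  have hLg := continuous_logJacobian hg hg'
  have hLh := (contDiff_one_logJacobian hh hh').continuous_deriv_one
  simp only [bottThurston_eq_integral_logJacobian, logJacobian_comp (hf' _) (hg' _), add_mul]
  exact integral_add (Continuous.intervalIntegrable (by fun_prop) _ _)
    (Continuous.intervalIntegrable (by fun_prop) _ _)

theorem integral_deriv_mul_comp_eq_mul_bottThurston {l m n : ℤ}
    (hf : IsCircleCoveringLift 1 l f) (hg : IsCircleCoveringLift 2 m g)
    (hh : ContDiff ℝ 1 h) (hhT : h (2 * π) = h 0 + n * (2 * π)) :
    ∫ θ in (0 : ℝ)..2 * π,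
        deriv h θ * (logJacobian f (g (h θ)) * deriv (logJacobian g) (h θ)) =
      n * bottThurston f g := by
  have hLf := continuous_logJacobian hf.contDiff hf.deriv_ne_zero
  have hLg := (contDiff_one_logJacobian hg.contDiff hg.deriv_ne_zero).continuous_deriv_one
  have hgc := hg.contDiff.continuous
  have periodic_comp : Function.Periodic (fun y ↦ logJacobian f (g y)) (2 * π) := fun y ↦ by
    simp only [hg.map_add_two_pi, (periodic_logJacobian_of_map_add hf.map_add_two_pi).int_mul m _]
  have periodic_deriv : Function.Periodic (deriv (logJacobian g)) (2 * π) :=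
    periodic_deriv_of_map_add (c := 0) fun y ↦ by
      rw [periodic_logJacobian_of_map_add hg.map_add_two_pi, add_zero]
  simpa [bottThurston_eq_integral_logJacobian] using
    integral_deriv_smul_comp_of_periodic (a := 0) (by fun_prop)
      (periodic_comp.mul periodic_deriv) hh (by rwa [zero_add])

theorem bottThurston_comp_right {l m n : ℤ} (hf : IsCircleCoveringLift 1 l f)
    (hg : IsCircleCoveringLift 2 m g) (hh : IsCircleCoveringLift 2 n h) :
    bottThurston f (g ∘ h) =
      n * bottThurston f g +
        ∫ θ in (0 : ℝ)..2 * π, logJacobian f (g (h θ)) * deriv (logJacobian h) θ := by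
  have hLf := continuous_logJacobian hf.contDiff hf.deriv_ne_zero
  have hLg := contDiff_one_logJacobian hg.contDiff hg.deriv_ne_zero
  have hLh := contDiff_one_logJacobian hh.contDiff hh.deriv_ne_zero
  have hgc := hg.contDiff.continuous
  have hh₁ : ContDiff ℝ 1 h := hh.contDiff.of_le one_le_two
  have integrand (θ : ℝ) :
      logJacobian f ((g ∘ h) θ) * deriv (logJacobian (g ∘ h)) θ =
        deriv h θ * (logJacobian f (g (h θ)) * deriv (logJacobian g) (h θ)) +
          logJacobian f (g (h θ)) * deriv (logJacobian h) θ := by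
    rw [deriv_logJacobian_comp hg.deriv_ne_zero hh.deriv_ne_zero
      (hLg.differentiable one_ne_zero _) (hLh.differentiable one_ne_zero _), Function.comp_apply]
    ring
  have hhT : h (2 * π) = h 0 + n * (2 * π) := by simpa using hh.map_add_two_pi 0
  rw [← integral_deriv_mul_comp_eq_mul_bottThurston hf hg hh₁ hhT,
    bottThurston_eq_integral_logJacobian]
  simp only [integrand]
  exact integral_add (Continuous.intervalIntegrable (by fun_prop) _ _)
    (Continuous.intervalIntegrable (by fun_prop) _ _)

end BottThurston

theorem bottThurston_cocycle_general {f₁ f₂ f₃ : ℝ → ℝ} {l m n : ℤ}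
    (h₁ : IsCircleCoveringLift 1 l f₁) (h₂ : IsCircleCoveringLift 2 m f₂)
    (h₃ : IsCircleCoveringLift 2 n f₃) :
    n * bottThurston f₁ f₂ + bottThurston (f₁ ∘ f₂) f₃ =
      bottThurston f₂ f₃ + bottThurston f₁ (f₂ ∘ f₃) := by
  rw [bottThurston_comp_left h₁.contDiff h₁.deriv_ne_zero (h₂.contDiff.of_le one_le_two)
      h₂.deriv_ne_zero h₃.contDiff h₃.deriv_ne_zero,
    bottThurston_comp_right h₁ h₂ h₃]
  ring

/-- The Bott–Thurston cocycle satisfies the group 2-cocycle identity. -/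
theorem bottThurston_cocycle (f₁ f₂ f₃ : ℝ → ℝ)
    (h₁ : IsCircleDiffLift f₁) (h₂ : IsCircleDiffLift f₂) (h₃ : IsCircleDiffLift f₃) :
    bottThurston f₁ f₂ + bottThurston (f₁ ∘ f₂) f₃ =
      bottThurston f₂ f₃ + bottThurston f₁ (f₂ ∘ f₃) := by
  simpa using bottThurston_cocycle_general (h₁.isCircleCoveringLift 1)
    (h₂.isCircleCoveringLift 2) (h₃.isCircleCoveringLift 2)
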